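/- arXiv:2602.14487 — 7 statements merged into one kernel-verified Lean document; each statement's English description precedes it below -/
import Mathlib

section
/- For every k ≥ 0, the probability that τ = 2k+1 equals the k-th Catalan number divided by 2^{2k+1}; that is, P(τ = 2k+1) = (1/(2·4^k)) · (1/(k+1)) · C(2k, k), where C(2k, k) denotes the central binomial coefficient. -/
open MeasureTheory ProbabilityTheory

/-- Number of nonpositive walks of length n ending at -h. -/
def bwalk : ℕ → ℕ → ℕ
  | 0, 0 => 1
  | 0, _ + 1 => 0
  | n + 1, 0 => bwalk n 1
  | n + 1, h + 1 => bwalk n h + bwalk n (h + 2)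

lemma bwalk_gt : ∀ n h, n < h → bwalk n h = 0
  | 0, 0, hh => by omega
  | 0, _ + 1, _ => rfl
  | n + 1, 0, hh => by omega
  | n + 1, h + 1, hh => by
    rw [bwalk, bwalk_gt n h (by omega), bwalk_gt n (h+2) (by omega)]

lemma bwalk_diag : ∀ n, bwalk n n = 1
  | 0 => rfl
  | n + 1 => by rw [bwalk, bwalk_diag n, bwalk_gt n (n+2) (by omega)]

lemma bwalk_choose : ∀ n h j, n = h + 2 * (j + 1) →
    bwalk n h + n.choose j = n.choose (j + 1)
  | 0, h, j, e => by omega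
  | n + 1, 0, 0, e => by
    obtain rfl : n = 1 := by omega
    decide
  | n + 1, 0, j + 1, e => by
    have h1 := bwalk_choose n 1 j (by omega)
    have h2 : n.choose (j + 2) = n.choose (j + 1) := by
      have : n = 2 * (j + 1) + 1 := by omega
      rw [this]; exact Nat.choose_symm_half (j+1)
    rw [bwalk, Nat.choose_succ_succ, Nat.choose_succ_succ]
    simp only [Nat.succ_eq_add_one] at *
    rw [h2]
    omega
  | n + 1, h + 1, 0, e => by
    have h1 := bwalk_choose n h 0 (by omega)
    have h2 : bwalk n (h + 2) = 1 := by
      have : n = h + 2 := by omega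
      rw [this]; exact bwalk_diag _
    rw [bwalk, h2]
    simp at h1 ⊢
    omega
  | n + 1, h + 1, j + 1, e => by
    have h1 := bwalk_choose n h (j+1) (by omega)
    have h2 := bwalk_choose n (h+2) j (by omega)
    rw [bwalk, Nat.choose_succ_succ, Nat.choose_succ_succ n (j+1)]
    simp only [Nat.succ_eq_add_one] at *
    omega

lemma bwalk_catalan (k : ℕ) : (k + 1) * bwalk (2 * k) 0 = (2 * k).choose k := by
  cases k with
  | zero => rfl
  | succ j =>
    have h1 := bwalk_choose (2 * (j + 1)) 0 j (by omega)
    have h2 := Nat.choose_succ_right_eq (2 * (j + 1)) j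
    have h3 : 2 * (j + 1) - j = j + 2 := by omega
    rw [h3] at h2
    nlinarith

/-- The event of a nonpositive walk up to time n ending at -h. -/
def bev {Ω : Type*} (X : ℕ → Ω → ℤ) (n h : ℕ) : Set Ω :=
  {ω | (∀ m ≤ n, ∑ i ∈ Finset.range m, X i ω ≤ 0) ∧ ∑ i ∈ Finset.range n, X i ω = -(h : ℤ)}

lemma bev_meas {Ω : Type*} [MeasurableSpace Ω] (X : ℕ → Ω → ℤ) (hmeas : ∀ i, Measurable (X i))
    (n h : ℕ) : MeasurableSet (bev X n h) := by
  have hS : ∀ m, Measurable (fun ω => ∑ i ∈ Finset.range m, X i ω) := fun m =>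
    Finset.measurable_sum _ (fun i _ => hmeas i)
  unfold bev
  refine MeasurableSet.inter ?_ ?_
  · have : {ω | ∀ m ≤ n, ∑ i ∈ Finset.range m, X i ω ≤ 0}
        = ⋂ m, ⋂ (_ : m ≤ n), {ω | ∑ i ∈ Finset.range m, X i ω ≤ 0} := by ext; simp
    change MeasurableSet {ω | ∀ m ≤ n, ∑ i ∈ Finset.range m, X i ω ≤ 0}
    rw [this]
    exact MeasurableSet.iInter fun m => MeasurableSet.iInter fun _ =>
      measurableSet_le (hS m) measurable_const
  · exact hS n (measurableSet_singleton _)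

lemma bev_indep {Ω : Type*} [MeasurableSpace Ω] (P : Measure Ω) [IsProbabilityMeasure P]
    (X : ℕ → Ω → ℤ) (hmeas : ∀ i, Measurable (X i))
    (hindep : iIndepFun X P) (n h : ℕ) (x : ℤ) :
    P (bev X n h ∩ {ω | X n ω = x}) = P (bev X n h) * P {ω | X n ω = x} := by
  have h1 := hindep.indepFun_finset (Finset.range n) {n} (by simp) hmeas
  let B : Set (Finset.range n → ℤ) := {f | bev (fun i (_ : Unit) =>
    if hi : i ∈ Finset.range n then f ⟨i, hi⟩ else 0) n h = Set.univ}
  let C : Set (({n} : Finset ℕ) → ℤ) := {f | f ⟨n, by simp⟩ = x}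
  have h2 := h1.measure_inter_preimage_eq_mul B C (Set.to_countable B).measurableSet
    (Set.to_countable C).measurableSet
  have hB : (fun a (i : Finset.range n) => X i a) ⁻¹' B = bev X n h := by
    ext ω
    have key : ∀ m ≤ n, ∑ i ∈ Finset.range m, (if i ∈ Finset.range n then X i ω else 0)
        = ∑ i ∈ Finset.range m, X i ω := by
      intro m hm
      refine Finset.sum_congr rfl fun i hi => ?_
      have : i ∈ Finset.range n := by simp at hi ⊢; omega
      rw [if_pos this]
    simp only [B, bev, Set.mem_preimage, Set.mem_ofPred_eq, Set.eq_univ_iff_forall, dite_eq_ite]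
    rw [key n le_rfl]
    constructor
    · intro H
      exact ⟨fun m hm => by rw [← key m hm]; exact (H ()).1 m hm, (H ()).2⟩
    · intro H _
      exact ⟨fun m hm => by rw [key m hm]; exact H.1 m hm, H.2⟩
  rw [hB] at h2
  exact h2

lemma bev_prob {Ω : Type*} [MeasurableSpace Ω] (P : Measure Ω) [IsProbabilityMeasure P]
    (X : ℕ → Ω → ℤ) (hmeas : ∀ i, Measurable (X i))
    (hindep : iIndepFun X P)
    (hheads : ∀ i, P {ω | X i ω = 1} = 1/2)
    (htails : ∀ i, P {ω | X i ω = -1} = 1/2)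
    (hae : ∀ᵐ ω ∂P, ∀ i, X i ω = 1 ∨ X i ω = -1) :
    ∀ n h, P (bev X n h) = (bwalk n h : ENNReal) * (1/2) ^ n
  | 0, 0 => by simp [bev, bwalk]
  | 0, h + 1 => by
    have : bev X 0 (h+1) = ∅ := by
      ext ω; simp [bev]; omega
    simp [this, bwalk]
  | n + 1, 0 => by
    have e : bev X (n+1) 0 =ᵐ[P] (bev X n 1 ∩ {ω | X n ω = 1} : Set Ω) := by
      filter_upwards [hae] with ω hω
      apply propext
      change (ω ∈ bev X (n+1) 0) ↔ ω ∈ bev X n 1 ∩ {ω | X n ω = 1}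
      simp only [bev, Set.mem_inter_iff, Set.mem_ofPred_eq, Finset.sum_range_succ]
      constructor
      · rintro ⟨a, b⟩
        have := a n (by omega)
        rcases hω n with c | c
        · exact ⟨⟨fun m hm => a m (by omega), by push_cast at *; omega⟩, c⟩
        · push_cast at *; omega
      · rintro ⟨⟨a, b⟩, c⟩
        refine ⟨fun m hm => ?_, by push_cast at *; omega⟩
        rcases Nat.lt_or_ge n m with q | q
        · obtain rfl : m = n + 1 := by omega
          rw [Finset.sum_range_succ]; push_cast at *; omega
        · exact a m q
    rw [measure_congr e, bev_indep P X hmeas hindep, hheads,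
      bev_prob P X hmeas hindep hheads htails hae n 1, bwalk]
    ring
  | n + 1, h + 1 => by
    have e : bev X (n+1) (h+1) =ᵐ[P]
        ((bev X n h ∩ {ω | X n ω = -1}) ∪ (bev X n (h+2) ∩ {ω | X n ω = 1}) : Set Ω) := by
      filter_upwards [hae] with ω hω
      apply propext
      change (ω ∈ bev X (n+1) (h+1)) ↔
        ω ∈ (bev X n h ∩ {ω | X n ω = -1}) ∪ (bev X n (h+2) ∩ {ω | X n ω = 1})
      simp only [bev, Set.mem_union, Set.mem_inter_iff, Set.mem_ofPred_eq, Finset.sum_range_succ]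
      constructor
      · rintro ⟨a, b⟩
        rcases hω n with c | c
        · exact Or.inr ⟨⟨fun m hm => a m (by omega), by push_cast at *; omega⟩, c⟩
        · exact Or.inl ⟨⟨fun m hm => a m (by omega), by push_cast at *; omega⟩, c⟩
      · rintro (⟨⟨a, b⟩, c⟩ | ⟨⟨a, b⟩, c⟩)
        all_goals
          refine ⟨fun m hm => ?_, by push_cast at *; omega⟩
          rcases Nat.lt_or_ge n m with q | q
          · obtain rfl : m = n + 1 := by omega
            rw [Finset.sum_range_succ]; push_cast at *; omega
          · exact a m q
    rw [measure_congr e, measure_union, bev_indep P X hmeas hindep, bev_indep P X hmeas hindep,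
      hheads, htails,
      bev_prob P X hmeas hindep hheads htails hae n h,
      bev_prob P X hmeas hindep hheads htails hae n (h+2), bwalk]
    · push_cast; ring
    · rw [Set.disjoint_left]
      rintro ω ⟨_, h1⟩ ⟨_, h2⟩
      simp only [Set.mem_ofPred_eq] at h1 h2
      omega
    · exact (bev_meas X hmeas _ _).inter (hmeas n (measurableSet_singleton _))

/-- For every k ≥ 0, P(τ = 2k+1) = (1/(2·4ᵏ)) · (1/(k+1)) · C(2k, k),
the k-th Catalan number divided by 2^(2k+1). -/
theorem prob_tau_eq
{Ω : Type*} [MeasurableSpace Ω] (P : Measure Ω) [IsProbabilityMeasure P]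
    (X : ℕ → Ω → ℤ) (hmeas : ∀ i, Measurable (X i))
    (hindep : iIndepFun X P)
    (hheads : ∀ i, P {ω | X i ω = 1} = 1/2)
    (htails : ∀ i, P {ω | X i ω = -1} = 1/2)
    (τ : Ω → ℕ) (hτ : ∀ ω, τ ω = sInf {n | 1 ≤ n ∧ (∑ i ∈ Finset.range n, X i ω) = 1}) :
    ∀ k : ℕ, P {ω | τ ω = 2 * k + 1} =
      (1 / (2 * 4 ^ k)) * (1 / (k + 1)) * ((2 * k).choose k : ENNReal) := by
  intro k
  have hae : ∀ᵐ ω ∂P, ∀ i, X i ω = 1 ∨ X i ω = -1 := by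
    rw [ae_all_iff]
    intro i
    have hm1 : MeasurableSet {ω | X i ω = 1} := hmeas i (measurableSet_singleton _)
    have hm2 : MeasurableSet {ω | X i ω = -1} := hmeas i (measurableSet_singleton _)
    have hd : Disjoint {ω | X i ω = 1} {ω | X i ω = -1} := by
      rw [Set.disjoint_left]
      intro ω h1 h2
      simp only [Set.mem_ofPred_eq] at h1 h2
      omega
    have hu : P ({ω | X i ω = 1} ∪ {ω | X i ω = -1}) = 1 := by
      rw [measure_union hd hm2, hheads, htails]
      exact ENNReal.add_halves 1
    exact (mem_ae_iff_prob_eq_one (hm1.union hm2)).2 hu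
  have e : {ω | τ ω = 2 * k + 1} =ᵐ[P] (bev X (2*k) 0 ∩ {ω | X (2*k) ω = 1} : Set Ω) := by
    filter_upwards [hae] with ω hω
    apply propext
    change (τ ω = 2 * k + 1) ↔ ω ∈ bev X (2*k) 0 ∩ {ω | X (2*k) ω = 1}
    simp only [bev, Set.mem_inter_iff, Set.mem_ofPred_eq]
    rw [hτ]
    constructor
    · intro H
      have hne : {n | 1 ≤ n ∧ (∑ i ∈ Finset.range n, X i ω) = 1}.Nonempty :=
        Nat.nonempty_of_pos_sInf (by omega)
      have hmem := Nat.sInf_mem hne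
      rw [H] at hmem
      have hno : ∀ m ≤ 2 * k, ∑ i ∈ Finset.range m, X i ω ≤ 0 := by
        intro m
        induction m with
        | zero => simp
        | succ m ih =>
          intro hm
          have h1 := ih (by omega)
          have h2 : m + 1 ∉ {n | 1 ≤ n ∧ (∑ i ∈ Finset.range n, X i ω) = 1} :=
            Nat.notMem_of_lt_sInf (by omega)
          simp only [Set.mem_ofPred_eq, not_and] at h2
          have h3 := h2 (by omega)
          rw [Finset.sum_range_succ] at h3 ⊢
          rcases hω m with c | c <;> omega
      have h4 := hmem.2
      rw [Finset.sum_range_succ] at h4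
      have h5 := hno (2*k) le_rfl
      refine ⟨⟨hno, ?_⟩, ?_⟩ <;> rcases hω (2*k) with c | c <;> push_cast <;> omega
    · rintro ⟨⟨a, b⟩, c⟩
      have hmem : 2 * k + 1 ∈ {n | 1 ≤ n ∧ (∑ i ∈ Finset.range n, X i ω) = 1} := by
        refine ⟨by omega, ?_⟩
        rw [Finset.sum_range_succ, b, c]; simp
      apply le_antisymm (Nat.sInf_le hmem)
      by_contra hlt
      have h1 := Nat.sInf_mem ⟨_, hmem⟩
      have h2 := a _ (by omega : sInf {n | 1 ≤ n ∧ (∑ i ∈ Finset.range n, X i ω) = 1} ≤ 2 * k)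
      have h3 := h1.2
      omega
  rw [measure_congr e, bev_indep P X hmeas hindep, hheads,
    bev_prob P X hmeas hindep hheads htails hae, ← bwalk_catalan]
  have h4 : (1 / (2 * 4 ^ k) : ENNReal) = (1/2)^(2*k) * (1/2) := by
    rw [← pow_succ, one_div, one_div, ← ENNReal.inv_pow, pow_succ, pow_mul, mul_comm]
    norm_num
  have h5 : (1 / ((k:ENNReal) + 1)) * ((k:ENNReal) + 1) = 1 := by
    rw [one_div]
    exact ENNReal.inv_mul_cancel (by simp) (by simp)
  rw [h4]
  push_cast
  calc _ = (1/2)^(2*k) * (1/2) * ((1 / ((k:ENNReal) + 1)) * ((k:ENNReal) + 1))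
        * (bwalk (2*k) 0 : ENNReal) := by rw [h5]; ring
    _ = _ := by simp only [mul_assoc]
end

section
/- The probabilities P(τ = 2k+1) sum to 1: ∑_{k≥0} C(2k, k)/((k+1) · 2^{2k+1}) = 1, where C(2k, k) denotes the central binomial coefficient. -/
noncomputable def catA (n : ℕ) : ℝ := (Nat.centralBinom n : ℝ) / 4 ^ n

lemma catA_succ (n : ℕ) : catA (n + 1) = catA n * ((2 * n + 1) / (2 * n + 2)) := by
  have h : ((n : ℝ) + 1) * (Nat.centralBinom (n + 1) : ℝ)
      = 2 * (2 * n + 1) * (Nat.centralBinom n : ℝ) := by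
    exact_mod_cast Nat.succ_mul_centralBinom_succ n
  have hn : (n : ℝ) + 1 ≠ 0 := by positivity
  have h' : (Nat.centralBinom (n + 1) : ℝ)
      = 2 * (2 * n + 1) * (Nat.centralBinom n : ℝ) / (n + 1) := by
    rw [eq_div_iff hn, ← h]; ring
  have h2 : (2 * (n : ℝ) + 2) = 2 * (n + 1) := by ring
  unfold catA
  rw [h', h2, pow_succ]
  field_simp
  ring

lemma catA_nonneg (n : ℕ) : 0 ≤ catA n := by unfold catA; positivity

lemma catA_sq (n : ℕ) : catA n ^ 2 * (2 * n + 1) ≤ 1 := by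
  induction n with
  | zero => simp [catA]
  | succ n ih =>
    refine le_trans ?_ ih
    rw [catA_succ, mul_pow, mul_assoc]
    refine mul_le_mul_of_nonneg_left ?_ (sq_nonneg _)
    push_cast
    rw [div_pow, div_mul_eq_mul_div, div_le_iff₀ (by positivity)]
    have : (0 : ℝ) ≤ n := by positivity
    nlinarith

lemma catA_tendsto : Filter.Tendsto catA Filter.atTop (nhds 0) := by
  have h1 : Filter.Tendsto (fun n => catA n ^ 2) Filter.atTop (nhds 0) := by
    refine squeeze_zero (fun n => sq_nonneg _) (fun n => ?_)
      (tendsto_one_div_add_atTop_nhds_zero_nat (𝕜 := ℝ))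
    rw [le_div_iff₀ (by positivity)]
    refine le_trans (mul_le_mul_of_nonneg_left ?_ (sq_nonneg _)) (catA_sq n)
    have : (0 : ℝ) ≤ n := by positivity
    linarith
  have h2 := h1.sqrt
  simpa [Real.sqrt_sq (catA_nonneg _)] using h2

lemma cat_partial (n : ℕ) :
    ∑ k ∈ Finset.range n, ((2 * k).choose k : ℝ) / ((k + 1) * 2 ^ (2 * k + 1))
      = 1 - catA n := by
  induction n with
  | zero => simp [catA]
  | succ n ih =>
    rw [Finset.sum_range_succ, ih, catA_succ, ← Nat.centralBinom_eq_two_mul_choose]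
    unfold catA
    have h2 : (2 * (n : ℝ) + 2) = 2 * (n + 1) := by ring
    have hn : (n : ℝ) + 1 ≠ 0 := by positivity
    rw [h2, pow_succ, pow_mul, show (2 : ℝ) ^ 2 = 4 by norm_num]
    field_simp
    ring

/-- The probabilities P(τ = 2k+1) sum to 1:
∑_{k≥0} C(2k, k) / ((k+1) · 2^(2k+1)) = 1. -/
theorem catalan_prob_sum_one :
    ∑' k : ℕ, ((2 * k).choose k : ℝ) / ((k + 1) * 2 ^ (2 * k + 1)) = 1 := by
  refine HasSum.tsum_eq ?_
  rw [hasSum_iff_tendsto_nat_of_nonneg (fun k => by positivity)]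
  simp_rw [cat_partial]
  simpa using catA_tendsto.const_sub 1
end

section
/- The expected value of the proportion of heads at the stopping time τ equals π/4: E[H_τ/τ] = π/4. -/
open MeasureTheory ProbabilityTheory Real
open scoped Classical

lemma multichoose_half (k : ℕ) :
    Ring.choose ((1/2 : ℝ) + k - 1) k = (Nat.centralBinom k : ℝ) / 4 ^ k := by
  rw [← Ring.multichoose_eq]
  have h := fun k => Ring.factorial_nsmul_multichoose_eq_ascPochhammer (1/2 : ℝ) k
  simp only [Polynomial.ascPochhammer_smeval_eq_eval, nsmul_eq_mul] at h
  induction k with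
  | zero => simp
  | succ k ih =>
    have h1 := h (k+1)
    rw [ascPochhammer_succ_eval, ← h k, ih, Nat.factorial_succ] at h1
    have h2 : ((k : ℝ) + 1) * (k + 1).centralBinom = 2 * (2 * k + 1) * k.centralBinom := by
      exact_mod_cast Nat.succ_mul_centralBinom_succ k
    have hf : (k.factorial : ℝ) ≠ 0 := by positivity
    have hk : (k : ℝ) + 1 ≠ 0 := by positivity
    push_cast at h1
    field_simp at h1
    rw [eq_div_iff (by positivity)]
    apply mul_left_cancel₀ hk
    rw [pow_succ]
    linear_combination (2 : ℝ) * h1 - h2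

lemma hasSum_centralBinom {y : ℝ} (h0 : 0 ≤ y) (h1 : y < 1) :
    HasSum (fun k : ℕ => (Nat.centralBinom k : ℝ) / 4 ^ k * y ^ k) (1 / √(1 - y)) := by
  have h := Real.one_div_one_sub_rpow_hasFPowerSeriesOnBall_zero (1/2)
  have := h.hasSum (y := y) (by simp [enorm_eq_nnnorm, abs_of_nonneg h0, ← NNReal.coe_lt_coe, h1])
  simp only [FormalMultilinearSeries.ofScalars_apply_eq, multichoose_half, zero_add] at this
  rw [Real.sqrt_eq_rpow]
  simpa using this

lemma hasSum_pi : HasSum (fun k : ℕ => (Nat.centralBinom k : ℝ) / 4 ^ k / (2 * k + 1)) (π / 2) := by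
  have key : ∀ t ∈ Set.Ioo (0:ℝ) (π/2), 
      HasSum (fun k : ℕ => (Nat.centralBinom k : ℝ) / 4 ^ k * (sin t ^ (2 * k) * cos t)) 1 := by
    intro t ht
    have hc : 0 < cos t := cos_pos_of_mem_Ioo ⟨by linarith [ht.1, pi_pos], ht.2⟩
    have := (hasSum_centralBinom (y := sin t ^ 2) (by positivity) (by nlinarith [sin_sq_add_cos_sq t])).mul_right (cos t)
    have e : 1 - sin t ^ 2 = cos t ^ 2 := by linarith [sin_sq_add_cos_sq t]
    rw [e, Real.sqrt_sq hc.le, one_div, inv_mul_cancel₀ hc.ne'] at this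
    simpa [pow_mul, mul_assoc] using this
  have hae : ∀ᵐ t : ℝ, t ∈ Set.uIoc 0 (π/2) → t ∈ Set.Ioo (0:ℝ) (π/2) := by
    have : ∀ᵐ t : ℝ, t ≠ π/2 := by simp [ae_iff]
    filter_upwards [this] with t ht h
    rw [Set.uIoc_of_le (by positivity)] at h
    exact ⟨h.1, lt_of_le_of_ne h.2 ht⟩
  have := intervalIntegral.hasSum_integral_of_dominated_convergence (μ := volume) (a := 0) (b := π/2)
    (F := fun (k : ℕ) t => (Nat.centralBinom k : ℝ) / 4 ^ k * (sin t ^ (2 * k) * cos t))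
    (f := fun _ => 1)
    (fun (k : ℕ) t => (Nat.centralBinom k : ℝ) / 4 ^ k * (sin t ^ (2 * k) * cos t))
    (fun n => by apply Continuous.aestronglyMeasurable; fun_prop)
    (fun n => by
      filter_upwards [hae] with t ht h
      have ht := ht h
      have hc : 0 < cos t := cos_pos_of_mem_Ioo ⟨by linarith [ht.1, pi_pos], ht.2⟩
      rw [Real.norm_of_nonneg]
      have := Even.pow_nonneg (even_two_mul n) (sin t)
      positivity)
    (by filter_upwards [hae] with t ht h using (key t (ht h)).summable)
    (by
      have : IntervalIntegrable (fun _ => (1:ℝ)) volume 0 (π/2) := by simp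
      refine this.congr_ae ?_
      rw [Filter.EventuallyEq, ae_restrict_iff' measurableSet_uIoc]
      filter_upwards [hae] with t ht h using (key t (ht h)).tsum_eq.symm)
    (by filter_upwards [hae] with t ht h using key t (ht h))
  have e2 : π / 2 = ∫ t in (0:ℝ)..(π / 2), (1:ℝ) := by simp
  rw [e2]
  have e3 : (fun k : ℕ => (Nat.centralBinom k : ℝ) / 4 ^ k / (2 * k + 1)) =
      fun k : ℕ => ∫ t in (0:ℝ)..(π / 2), (Nat.centralBinom k : ℝ) / 4 ^ k * (sin t ^ (2 * k) * cos t) := by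
    funext k
    rw [intervalIntegral.integral_const_mul]
    have := @integral_sin_pow_mul_cos_pow_odd 0 (π/2) (2*k) 0
    simp at this
    rw [this]
    simp [div_eq_mul_inv]
  rw [e3]
  exact this

/-- law of the simple random walk -/
noncomputable def qq : ℕ → ℤ → ℝ
  | 0, x => if x = 0 then 1 else 0
  | n+1, x => (qq n (x-1) + qq n (x+1)) / 2

lemma qq_lt (n : ℕ) : ∀ x : ℤ, x < -n → qq n x = 0 := by
  induction n with
  | zero => intro x hx; simp [qq]; rintro rfl; simp at hx
  | succ n ih => intro x hx; push_cast at hx; rw [qq, ih _ (by lia), ih _ (by lia)]; simp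

lemma qq_parity (n : ℕ) : ∀ x : ℤ, (x + n) % 2 = 1 → qq n x = 0 := by
  induction n with
  | zero => intro x hx; simp [qq]; rintro rfl; simp at hx
  | succ n ih => intro x hx; push_cast at hx; rw [qq, ih _ (by lia), ih _ (by lia)]; simp

lemma qq_choose (n : ℕ) : ∀ j : ℕ, qq n (2 * j - n) = (n.choose j : ℝ) / 2 ^ n := by
  induction n with
  | zero => 
    intro j
    rcases j with _ | j
    · simp [qq]
    · simp [qq]; lia
  | succ n ih =>
    intro j
    rcases j with _ | j
    · have h := ih 0
      rw [qq, qq_lt _ _ (by push_cast; lia)]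
      have e : (2 * ((0:ℕ):ℤ) - ((n+1:ℕ):ℤ) + 1) = 2 * ((0:ℕ):ℤ) - n := by push_cast; ring
      rw [e, h]; simp [pow_succ]; 
      ring
    · rw [qq]
      have e : (2 * ((j+1:ℕ):ℤ) - ((n+1:ℕ):ℤ) + 1) = 2 * ((j+1:ℕ):ℤ) - n := by push_cast; ring
      have e' : (2 * ((j+1:ℕ):ℤ) - ((n+1:ℕ):ℤ) - 1) = 2 * (j:ℤ) - n := by push_cast; ring
      rw [e, e', ih, ih, Nat.choose_succ_succ, pow_succ]
      push_cast
      ring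

lemma qq_diff_odd (k : ℕ) : qq (2*k+1) 0 - qq (2*k+1) 2 = 0 := by
  rw [qq_parity _ _ (by push_cast; lia), qq_parity _ _ (by push_cast; lia)]; simp

lemma qq_diff_even (k : ℕ) : ((k:ℝ)+1) * (qq (2*k) 0 - qq (2*k) 2) = Nat.centralBinom k / 4 ^ k := by
  have h1 := qq_choose (2*k) k
  have h2 := qq_choose (2*k) (k+1)
  have e1 : (2 * (k:ℤ) - ((2*k:ℕ):ℤ)) = 0 := by push_cast; ring
  have e2 : (2 * ((k+1:ℕ):ℤ) - ((2*k:ℕ):ℤ)) = 2 := by push_cast; ring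
  rw [e1] at h1; rw [e2] at h2
  have h3 := Nat.choose_succ_right_eq (2*k) k
  rw [show 2 * k - k = k by lia] at h3
  have h4 : (((2*k).choose (k+1) : ℕ):ℝ) * (k+1) = (2*k).choose k * k := by exact_mod_cast h3
  rw [h1, h2, Nat.centralBinom_eq_two_mul_choose, pow_mul]
  norm_num
  field_simp
  linear_combination -h4

section
variable {Ω : Type*} [MeasurableSpace Ω] (P : Measure Ω) [IsProbabilityMeasure P]
    (X : ℕ → Ω → ℤ)

def AA (n : ℕ) (x : ℤ) : Set Ω :=
  {ω | (∀ m ≤ n, (∑ i ∈ Finset.range m, X i ω) ≤ 0) ∧ (∑ i ∈ Finset.range n, X i ω) = x}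

lemma AA_meas (hmeas : ∀ i, Measurable (X i)) (n : ℕ) (x : ℤ) : MeasurableSet (AA X n x) := by
  have : AA X n x = (⋂ m ∈ Set.Iic n, {ω | (∑ i ∈ Finset.range m, X i ω) ≤ 0}) ∩
      {ω | (∑ i ∈ Finset.range n, X i ω) = x} := by
    ext ω; simp [AA]
  rw [this]
  have hS : ∀ m, Measurable (fun ω => ∑ i ∈ Finset.range m, X i ω) := 
    fun m => Finset.measurable_fun_sum _ (fun i _ => hmeas i)
  refine MeasurableSet.inter (MeasurableSet.biInter (Set.to_countable _) fun m _ => ?_) ?_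
  · exact measurableSet_le (hS m) measurable_const
  · exact measurableSet_eq_fun (hS n) measurable_const

lemma AA_indep (hmeas : ∀ i, Measurable (X i)) (hindep : iIndepFun X P) (n : ℕ) (x y : ℤ)
    (hy : P {ω | X n ω = y} = 1/2) :
    P.real (AA X n x ∩ {ω | X n ω = y}) = P.real (AA X n x) / 2 := by
  have h := hindep.indepFun_finset (Finset.range n) {n} (by simp) hmeas
  set g : Ω → (Finset.range n → ℤ) := fun a i => X i a with hg
  set g' : Ω → (({n} : Finset ℕ) → ℤ) := fun a i => X i a with hg'
  have e1 : AA X n x = g ⁻¹' (g '' AA X n x) := by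
    apply Set.Subset.antisymm (Set.subset_preimage_image _ _)
    rintro ω ⟨ω', h', he⟩
    have hX : ∀ i < n, X i ω' = X i ω := fun i hi => congrFun he ⟨i, by simpa using hi⟩
    have hS : ∀ m ≤ n, (∑ i ∈ Finset.range m, X i ω') = ∑ i ∈ Finset.range m, X i ω := 
      fun m hm => Finset.sum_congr rfl fun i hi => hX i (by simp at hi; lia)
    exact ⟨fun m hm => hS m hm ▸ h'.1 m hm, hS n le_rfl ▸ h'.2⟩
  have e2 : {ω | X n ω = y} = g' ⁻¹' {f | f ⟨n, by simp⟩ = y} := by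
    ext ω; simp [hg']
  have := h.measure_inter_preimage_eq_mul (g '' AA X n x) {f | f ⟨n, by simp⟩ = y}
    (Set.to_countable _).measurableSet (Set.to_countable _).measurableSet
  rw [← e1, ← e2, hy] at this
  rw [Measure.real, this, Measure.real]
  simp [div_eq_mul_inv]

lemma AA_prob (hmeas : ∀ i, Measurable (X i)) (hindep : iIndepFun X P)
    (hheads : ∀ i, P {ω | X i ω = 1} = 1/2)
    (htails : ∀ i, P {ω | X i ω = -1} = 1/2) 
    (hae : ∀ᵐ ω ∂P, ∀ i, X i ω = 1 ∨ X i ω = -1) (n : ℕ) : 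
    ∀ x : ℤ, x ≤ 1 → P.real (AA X n x) = qq n x - qq n (2 - x) := by
  have hA1 : ∀ n, AA X n 1 = ∅ := by
    intro n
    ext ω
    simp only [AA, Set.mem_ofPred_eq, Set.mem_empty_iff_false, iff_false]
    rintro ⟨h, h'⟩
    have := h n le_rfl
    lia
  induction n with
  | zero => 
    intro x hx
    by_cases h : x = 0
    · subst h
      have : AA X 0 0 = Set.univ := by ext; simp [AA]
      simp [this, qq]
    · have : AA X 0 x = ∅ := by ext; simp [AA]; lia
      rw [this]
      simp [qq, h, show 2 - x ≠ 0 by lia]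
  | succ n ih =>
    intro x hx
    by_cases h : x = 1
    · subst h; rw [hA1]; simp
    have hx : x ≤ 0 := by lia
    have e : AA X (n+1) x =ᵐ[P] ((AA X n (x-1) ∩ {ω | X n ω = 1}) ∪ (AA X n (x+1) ∩ {ω | X n ω = -1}) : Set Ω) := by
      rw [Filter.eventuallyEq_set]
      filter_upwards [hae] with ω hω
      have := hω n
      simp only [AA, Set.mem_ofPred_eq, Set.mem_union, Set.mem_inter_iff, Finset.sum_range_succ]
      constructor
      · rintro ⟨h1, h2⟩
        have h3 := fun m (hm : m ≤ n) => h1 m (by lia)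
        rcases this with h | h
        · exact Or.inl ⟨⟨h3, by lia⟩, h⟩
        · exact Or.inr ⟨⟨h3, by lia⟩, h⟩
      · have aux : (∀ m ≤ n, (∑ i ∈ Finset.range m, X i ω) ≤ 0) → 
          (∑ i ∈ Finset.range n, X i ω) + X n ω ≤ 0 → 
          ∀ m ≤ n+1, (∑ i ∈ Finset.range m, X i ω) ≤ 0 := by
          intro h1 h2 m hm
          rcases Nat.lt_or_ge n m with h | h
          · obtain rfl : m = n+1 := by lia
            rwa [Finset.sum_range_succ]
          · exact h1 m h
        rintro (⟨⟨h1, h2⟩, h3⟩ | ⟨⟨h1, h2⟩, h3⟩)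
        · exact ⟨aux h1 (by lia), by lia⟩
        · exact ⟨aux h1 (by lia), by lia⟩
    rw [measureReal_congr e, measureReal_union, AA_indep P X hmeas hindep n _ _ (hheads n),
      AA_indep P X hmeas hindep n _ _ (htails n), ih _ (by lia), ih _ (by lia), qq, qq]
    · rw [show 2 - (x-1) = 2 - x + 1 by ring, show 2 - (x+1) = 2 - x - 1 by ring]
      ring
    · rw [Set.disjoint_left]
      rintro ω ⟨_, h1⟩ ⟨_, h2⟩
      simp only [Set.mem_ofPred_eq] at h1 h2
      lia
    · exact (AA_meas X hmeas n _).inter (measurableSet_eq_fun (hmeas n) measurable_const)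

end

set_option maxHeartbeats 400000 in
/-- The expected proportion of heads at the stopping time τ equals π/4. -/
theorem expected_proportion_eq_pi_div_four
{Ω : Type*} [MeasurableSpace Ω] (P : Measure Ω) [IsProbabilityMeasure P]
    (X : ℕ → Ω → ℤ) (hmeas : ∀ i, Measurable (X i))
    (hindep : iIndepFun X P)
    (hheads : ∀ i, P {ω | X i ω = 1} = 1/2)
    (htails : ∀ i, P {ω | X i ω = -1} = 1/2)
    (τ : Ω → ℕ) (hτ : ∀ ω, τ ω = sInf {n | 1 ≤ n ∧ (∑ i ∈ Finset.range n, X i ω) = 1})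
(H : ℕ → Ω → ℕ)
    (hH : ∀ n ω, H n ω = ((Finset.range n).filter (fun i => X i ω = 1)).card) :
    ∫ ω, ((H (τ ω) ω : ℝ) / (τ ω : ℝ)) ∂P = π / 4 := by
  have hae : ∀ᵐ ω ∂P, ∀ i, X i ω = 1 ∨ X i ω = -1 := by
    rw [ae_all_iff]
    intro i
    have hm : ∀ y : ℤ, MeasurableSet {ω | X i ω = y} := fun y => 
      measurableSet_eq_fun (hmeas i) measurable_const
    have h : P ({ω | X i ω = 1} ∪ {ω | X i ω = -1}) = 1 := by
      rw [measure_union _ (hm _), hheads, htails]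
      · exact ENNReal.add_halves 1
      · rw [Set.disjoint_left]
        intro ω h1 h2
        simp only [Set.mem_ofPred_eq] at h1 h2
        lia
    have h' := (prob_compl_eq_zero_iff ((hm 1).union (hm (-1)))).2 h
    rw [ae_iff]
    have e : {a | ¬(X i a = 1 ∨ X i a = -1)} = ({ω | X i ω = 1} ∪ {ω | X i ω = -1})ᶜ := by
      ext ω; simp
    rw [e]
    exact h'
  have hS : ∀ m, Measurable (fun ω => ∑ i ∈ Finset.range m, X i ω) := 
    fun m => Finset.measurable_fun_sum _ (fun i _ => hmeas i)
  -- description of the stopping time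
  have hτ' : ∀ n ω, τ ω = n + 1 ↔ (∀ m ≤ n, (∑ i ∈ Finset.range m, X i ω) ≠ 1) ∧ 
      (∑ i ∈ Finset.range (n+1), X i ω) = 1 := by
    intro n ω
    rw [hτ]
    constructor
    · intro h
      have hne : {n | 1 ≤ n ∧ (∑ i ∈ Finset.range n, X i ω) = 1}.Nonempty := by
        by_contra hne
        rw [Set.not_nonempty_iff_eq_empty] at hne
        rw [hne] at h
        simp at h
      have h1 := Nat.sInf_mem hne
      rw [h] at h1
      refine ⟨fun m hm he => ?_, h1.2⟩
      rcases Nat.eq_zero_or_pos m with h0 | h0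
      · subst h0; simp at he
      have : m ∈ {n | 1 ≤ n ∧ (∑ i ∈ Finset.range n, X i ω) = 1} := ⟨h0, he⟩
      have := Nat.sInf_le this
      lia
    · rintro ⟨h1, h2⟩
      have hmem : n + 1 ∈ {n | 1 ≤ n ∧ (∑ i ∈ Finset.range n, X i ω) = 1} := ⟨by lia, h2⟩
      apply le_antisymm (Nat.sInf_le hmem)
      by_contra hlt
      exact h1 _ (by lia) (Nat.sInf_mem ⟨_, hmem⟩).2
  have hτm : Measurable τ := by
    have h1 : ∀ n, MeasurableSet (τ ⁻¹' {n + 1}) := by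
      intro n
      have : τ ⁻¹' {n+1} = (⋂ m ∈ Set.Iic n, {ω | (∑ i ∈ Finset.range m, X i ω) = 1}ᶜ) ∩
          {ω | (∑ i ∈ Finset.range (n+1), X i ω) = 1} := by
        ext ω
        simp [hτ' n ω]
      rw [this]
      refine MeasurableSet.inter (MeasurableSet.biInter (Set.to_countable _) fun m _ => ?_) ?_
      · exact (measurableSet_eq_fun (hS m) measurable_const).compl
      · exact measurableSet_eq_fun (hS _) measurable_const
    apply measurable_to_countable'
    intro n
    rcases n with _ | n
    · have : τ ⁻¹' {0} = (⋃ n, τ ⁻¹' {n+1})ᶜ := by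
        ext ω
        simp only [Set.mem_preimage, Set.mem_singleton_iff, Set.mem_compl_iff, Set.mem_iUnion,
          not_exists]
        constructor
        · intro h n; lia
        · intro h
          by_contra h0
          exact h (τ ω - 1) (by lia)
      rw [this]
      exact (MeasurableSet.iUnion h1).compl
    · exact h1 n
  have hlaw : ∀ n, P.real (τ ⁻¹' {n+1}) = (qq n 0 - qq n 2) / 2 := by
    intro n
    have e : τ ⁻¹' {n+1} =ᵐ[P] (AA X n 0 ∩ {ω | X n ω = 1} : Set Ω) := by
      rw [Filter.eventuallyEq_set]
      filter_upwards [hae] with ω hω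
      have h1 := hτ' n ω
      simp only [Set.mem_preimage, Set.mem_singleton_iff, h1, AA, Set.mem_inter_iff,
        Set.mem_ofPred_eq, Finset.sum_range_succ]
      constructor
      · rintro ⟨h2, h3⟩
        have h4 : ∀ m ≤ n, (∑ i ∈ Finset.range m, X i ω) ≤ 0 := by
          intro m
          induction m with
          | zero => simp
          | succ m ih =>
            intro hm
            have h5 := ih (by lia)
            have h6 := h2 _ hm
            rw [Finset.sum_range_succ] at h6 ⊢
            rcases hω m with h | h <;> lia
        have h5 := h4 n le_rfl
        rcases hω n with h | h
        · exact ⟨⟨h4, by lia⟩, h⟩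
        · lia
      · rintro ⟨⟨h2, h3⟩, h4⟩
        exact ⟨fun m hm => by have := h2 m hm; lia, by lia⟩
    rw [measureReal_congr e, AA_indep P X hmeas hindep n _ _ (hheads n),
      AA_prob P X hmeas hindep hheads htails hae n 0 (by lia)]
    simp
  set g : ℕ → ℝ := fun n => ((n:ℝ) + 1) / (2 * n) with hg
  have hint : ∫ ω, ((H (τ ω) ω : ℝ) / (τ ω : ℝ)) ∂P = ∫ ω, g (τ ω) ∂P := by
    apply integral_congr_ae
    filter_upwards [hae] with ω hω
    rcases hn : τ ω with _ | n
    · simp [hg]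
    have h1 := ((hτ' n ω).1 hn).2
    have h2 : ∀ N, (∑ i ∈ Finset.range N, X i ω) = 2 * (H N ω : ℤ) - N := by
      intro N
      rw [hH, Finset.card_filter]
      push_cast
      rw [Finset.mul_sum]
      have : (N : ℤ) = ∑ i ∈ Finset.range N, 1 := by simp
      rw [this, ← Finset.sum_sub_distrib]
      apply Finset.sum_congr rfl
      intro i _
      rcases hω i with h | h <;> simp [h]
    have h3 := h2 (n+1)
    rw [h1] at h3
    have h4 : (2:ℝ) * H (n+1) ω = (n+1 : ℕ) + 1 := by
      have : 2 * (H (n+1) ω : ℤ) = (n+1:ℕ) + 1 := by lia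
      exact_mod_cast this
    simp only [hg]
    rw [← h4]
    field_simp
  have hbound : ∀ n, ‖g n‖ ≤ 1 := by
    intro n
    rcases n with _ | n
    · simp [hg]
    rw [Real.norm_of_nonneg (by simp only [hg]; positivity)]
    simp only [hg]
    rw [div_le_one (by positivity)]
    push_cast
    linarith [(Nat.cast_nonneg n : (0:ℝ) ≤ n)]
  have hprob : IsProbabilityMeasure (P.map τ) := Measure.isProbabilityMeasure_map hτm.aemeasurable
  have hgi : Integrable g (P.map τ) :=
    Integrable.of_bound (measurable_of_countable g).aestronglyMeasurable 1
      (Filter.Eventually.of_forall hbound)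
  rw [hint, ← integral_map hτm.aemeasurable (measurable_of_countable g).aestronglyMeasurable,
    integral_countable hgi]
  have hmr : ∀ n, (P.map τ).real {n} = P.real (τ ⁻¹' {n}) := fun n =>
    map_measureReal_apply hτm (measurableSet_singleton n)
  simp only [hmr, smul_eq_mul]
  apply HasSum.tsum_eq
  have heven : HasSum (fun k : ℕ => P.real (τ ⁻¹' {2*k}) * g (2*k)) 0 := by
    convert hasSum_zero using 2 with k
    rcases k with _ | k
    · simp [hg]
    · rw [show 2 * (k+1) = (2*k+1)+1 by ring, hlaw, qq_diff_odd]; simp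
  have hodd : HasSum (fun k : ℕ => P.real (τ ⁻¹' {2*k+1}) * g (2*k+1)) (π/4) := by
    have h := hasSum_pi.div_const 2
    have e1 : π / 2 / 2 = π / 4 := by ring
    have e2 : (fun k : ℕ => P.real (τ ⁻¹' {2*k+1}) * g (2*k+1)) =
        fun k : ℕ => (Nat.centralBinom k : ℝ) / 4 ^ k / (2 * k + 1) / 2 := by
      funext k
      rw [hlaw, ← qq_diff_even]
      simp only [hg]
      push_cast
      field_simp
      ring
    rw [e2, ← e1]
    exact h
  have := HasSum.even_add_odd (f := fun n : ℕ => P.real (τ ⁻¹' {n}) * g n) heven hodd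
  rwa [zero_add] at this
end

section
/- The series ∑_{k≥0} C(2k, k) / (4^k · (2k+1)) converges and its sum equals π/2, where C(2k, k) denotes the central binomial coefficient. -/
open Real

noncomputable def cbA (k : ℕ) : ℝ := ((2 * k).choose k : ℝ) / 4 ^ k

lemma cbA_zero : cbA 0 = 1 := by simp [cbA]

lemma cbA_nonneg (k : ℕ) : 0 ≤ cbA k := by unfold cbA; positivity

lemma cbA_succ (m : ℕ) : (2 * m + 2) * cbA (m + 1) = (2 * m + 1) * cbA m := by
  have h := Nat.succ_mul_centralBinom_succ m
  rw [Nat.centralBinom_eq_two_mul_choose, Nat.centralBinom_eq_two_mul_choose] at h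
  have h' : ((m : ℝ) + 1) * ((2 * (m + 1)).choose (m + 1) : ℝ)
      = 2 * (2 * m + 1) * ((2 * m).choose m : ℝ) := by exact_mod_cast h
  unfold cbA
  rw [pow_succ]
  field_simp
  linear_combination 2 * h'

lemma cbA_sq_le (m : ℕ) : (2 * m + 1) * cbA m ^ 2 ≤ 1 := by
  induction m with
  | zero => simp [cbA_zero]
  | succ m ih =>
    have h := cbA_succ m
    have e : cbA (m + 1) = (2 * m + 1) * cbA m / (2 * m + 2) := by
      rw [← h]; field_simp
    rw [e]
    push_cast
    have : (2 * ((m : ℝ) + 1) + 1) * ((2 * m + 1) * cbA m / (2 * m + 2)) ^ 2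
        = ((2 * m + 1) * (2 * m + 3) / (2 * m + 2) ^ 2) * ((2 * m + 1) * cbA m ^ 2) := by
      field_simp
      ring
    rw [this]
    have h1 : ((2 * (m : ℝ) + 1) * (2 * m + 3) / (2 * m + 2) ^ 2) ≤ 1 := by
      rw [div_le_one (by positivity)]; nlinarith
    exact mul_le_one₀ h1 (by positivity) ih

lemma cbA_tendsto : Filter.Tendsto cbA Filter.atTop (nhds 0) := by
  have h1 : Filter.Tendsto (fun m : ℕ => √(1 / ((m : ℝ) + 1))) Filter.atTop (nhds 0) := by
    have := (continuous_sqrt.tendsto 0).comp (tendsto_one_div_add_atTop_nhds_zero_nat (𝕜 := ℝ))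
    rw [sqrt_zero] at this
    exact this
  refine squeeze_zero cbA_nonneg (fun m => ?_) h1
  apply Real.le_sqrt_of_sq_le
  rw [le_div_iff₀ (by positivity)]
  have := cbA_sq_le m
  nlinarith [sq_nonneg (cbA m), (Nat.cast_nonneg m : (0:ℝ) ≤ m)]

lemma cb_deriv (m : ℕ) (x : ℝ) :
    HasDerivAt (fun x => cos x * ∑ k ∈ Finset.range (m + 1), cbA k * sin x ^ (2 * k))
      (-((2 * m + 1) * cbA m * sin x ^ (2 * m + 1))) x := by
  induction m with
  | zero =>
    simpa [cbA_zero] using hasDerivAt_cos x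
  | succ m ih =>
    have h := ih.add ((hasDerivAt_cos x).mul
      (((hasDerivAt_sin x).pow (2 * (m + 1))).const_mul (cbA (m + 1))))
    refine (h.congr_of_eventuallyEq (Filter.Eventually.of_forall fun y => ?_)).congr_deriv ?_
    · simp only [Finset.sum_range_succ _ (m + 1), Pi.add_apply, Pi.mul_apply, Pi.pow_apply]
      ring
    · have e : 2 * (m + 1) - 1 = 2 * m + 1 := by omega
      rw [e, ← cbA_succ m]
      push_cast
      have hc : cos x ^ 2 = 1 - sin x ^ 2 := by rw [cos_sq']
      simp only [Pi.pow_apply]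
      linear_combination (2 * (m : ℝ) + 2) * cbA (m + 1) * sin x ^ (2 * m + 1) * hc

lemma cb_deriv2 (m : ℕ) (x : ℝ) :
    HasDerivAt (fun x => ∑ k ∈ Finset.range (m + 1), cbA k / (2 * k + 1) * sin x ^ (2 * k + 1))
      (cos x * ∑ k ∈ Finset.range (m + 1), cbA k * sin x ^ (2 * k)) x := by
  rw [Finset.mul_sum]
  apply HasDerivAt.fun_sum
  intro k _
  refine (((hasDerivAt_sin x).pow (2 * k + 1)).const_mul _).congr_deriv ?_
  push_cast
  field_simp

noncomputable def cbK (m : ℕ) (x : ℝ) : ℝ :=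
  x - ∑ k ∈ Finset.range (m + 1), cbA k / (2 * k + 1) * sin x ^ (2 * k + 1)
    + (π / 2 - x) * (1 - cos x * ∑ k ∈ Finset.range (m + 1), cbA k * sin x ^ (2 * k))

lemma cbK_deriv (m : ℕ) (x : ℝ) :
    HasDerivAt (cbK m) ((π / 2 - x) * ((2 * m + 1) * cbA m * sin x ^ (2 * m + 1))) x := by
  have h := ((hasDerivAt_id x).sub (cb_deriv2 m x)).add
    (((hasDerivAt_id x).const_sub (π / 2)).mul ((cb_deriv m x).const_sub 1))
  refine h.congr_deriv ?_
  simp only [id]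
  ring

lemma cbK_zero (m : ℕ) : cbK m 0 = 0 := by
  simp [cbK, Finset.sum_range_succ', cbA_zero]

lemma cbK_end (m : ℕ) :
    cbK m (π / 2) = π / 2 - ∑ k ∈ Finset.range (m + 1), cbA k / (2 * k + 1) := by
  simp [cbK]

lemma cb_trig {x : ℝ} (h0 : 0 < x) (h1 : x < π / 2) : (π / 2 - x) * sin x ≤ cos x := by
  have h := (lt_tan (x := π / 2 - x) (by linarith) (by linarith)).le
  rw [tan_eq_sin_div_cos, sin_pi_div_two_sub, cos_pi_div_two_sub,
    le_div_iff₀ (sin_pos_of_pos_of_lt_pi h0 (by linarith [pi_pos]))] at h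
  exact h

lemma cb_lower (m : ℕ) : 0 ≤ cbK m (π / 2) := by
  have hm : MonotoneOn (cbK m) (Set.Icc 0 (π / 2)) := by
    apply monotoneOn_of_deriv_nonneg (convex_Icc _ _)
    · exact fun x _ => (cbK_deriv m x).continuousAt.continuousWithinAt
    · exact fun x _ => (cbK_deriv m x).differentiableAt.differentiableWithinAt
    · intro x hx
      rw [interior_Icc] at hx
      rw [(cbK_deriv m x).deriv]
      have := cbA_nonneg m
      have hs := (sin_pos_of_pos_of_lt_pi hx.1 (by linarith [pi_pos, hx.2])).le
      have := sub_nonneg.2 hx.2.le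
      positivity
  have hp := pi_div_two_pos.le
  have := hm ⟨le_refl _, hp⟩ ⟨hp, le_refl _⟩ hp
  rwa [cbK_zero] at this

lemma cb_upper (m : ℕ) : cbK m (π / 2) ≤ cbA m := by
  have hd (x : ℝ) : HasDerivAt (fun x => cbA m * sin x ^ (2 * m + 1) - cbK m x)
      (cbA m * ((2 * m + 1) * sin x ^ (2 * m) * cos x)
        - (π / 2 - x) * ((2 * m + 1) * cbA m * sin x ^ (2 * m + 1))) x := by
    refine ((((hasDerivAt_sin x).pow (2 * m + 1)).const_mul _).sub (cbK_deriv m x)).congr_deriv ?_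
    push_cast
    simp only [Nat.add_sub_cancel]
  have hm : MonotoneOn (fun x => cbA m * sin x ^ (2 * m + 1) - cbK m x)
      (Set.Icc 0 (π / 2)) := by
    apply monotoneOn_of_deriv_nonneg (convex_Icc _ _)
    · exact fun x _ => (hd x).continuousAt.continuousWithinAt
    · exact fun x _ => (hd x).differentiableAt.differentiableWithinAt
    · intro x hx
      rw [interior_Icc] at hx
      rw [(hd x).deriv]
      have := cbA_nonneg m
      have hs := (sin_pos_of_pos_of_lt_pi hx.1 (by linarith [pi_pos, hx.2])).le
      have h2 := sub_nonneg.2 (cb_trig hx.1 hx.2)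
      have h3 : 0 ≤ (2 * m + 1) * cbA m * sin x ^ (2 * m) * (cos x - (π / 2 - x) * sin x) := by
        positivity
      refine h3.trans_eq ?_
      ring
  have hp := pi_div_two_pos.le
  have := hm ⟨le_refl _, hp⟩ ⟨hp, le_refl _⟩ hp
  simp [cbK_zero] at this
  exact this

/-- The series ∑_{k≥0} C(2k, k) / (4ᵏ · (2k+1)) converges with sum π/2. -/
theorem central_binom_series_pi_div_two :
    Summable (fun k : ℕ => ((2 * k).choose k : ℝ) / (4 ^ k * (2 * k + 1))) ∧
    ∑' k : ℕ, ((2 * k).choose k : ℝ) / (4 ^ k * (2 * k + 1)) = π / 2 := by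
  have h : HasSum (fun k : ℕ => ((2 * k).choose k : ℝ) / (4 ^ k * (2 * k + 1))) (π / 2) := by
    rw [hasSum_iff_tendsto_nat_of_nonneg (fun k => by positivity),
      ← Filter.tendsto_add_atTop_iff_nat 1]
    have hk : Filter.Tendsto (fun m => cbK m (π / 2)) Filter.atTop (nhds 0) :=
      squeeze_zero cb_lower cb_upper cbA_tendsto
    have h2 := hk.const_sub (π / 2)
    rw [sub_zero] at h2
    refine h2.congr fun m => ?_
    rw [cbK_end, sub_sub_cancel]
    exact Finset.sum_congr rfl fun k _ => by rw [cbA, div_div]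
  exact ⟨h.summable, h.tsum_eq⟩
end

section
/- The series ∑_{k≥0} C(2k, k) / (2 · 4^k · (k+1) · (2k+1)) converges and its sum equals π/2 − 1, where C(2k, k) denotes the central binomial coefficient. -/
open Real

noncomputable def acb (k : ℕ) : ℝ := ((2 * k).choose k : ℝ) / 4 ^ k

lemma acb_zero : acb 0 = 1 := by simp [acb]

lemma acb_pos (k : ℕ) : 0 < acb k := by
  unfold acb
  have : 0 < (2 * k).choose k := Nat.choose_pos (by omega)
  positivity

lemma acb_succ (k : ℕ) : (2 * k + 2) * acb (k + 1) = (2 * k + 1) * acb k := by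
  have h := Nat.succ_mul_centralBinom_succ k
  simp only [Nat.centralBinom] at h
  have h' : ((k : ℝ) + 1) * ((2 * (k + 1)).choose (k + 1) : ℝ)
      = 2 * (2 * k + 1) * ((2 * k).choose k : ℝ) := by exact_mod_cast h
  unfold acb
  rw [pow_succ]
  field_simp
  linarith

lemma acb_sq (n : ℕ) : acb n ^ 2 * (2 * n + 1) ≤ 1 := by
  induction n with
  | zero => simp [acb_zero]
  | succ n ih =>
    have e : acb (n + 1) = (2 * n + 1) * acb n / (2 * n + 2) := by
      rw [← acb_succ]; field_simp
    have : acb (n + 1) ^ 2 * (2 * (n + 1 : ℕ) + 1)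
        = (acb n ^ 2 * (2 * n + 1)) * ((2 * n + 1) * (2 * n + 3) / (2 * n + 2) ^ 2) := by
      rw [e]; push_cast; field_simp; ring
    rw [this]
    have h1 : ((2 * n + 1) * (2 * n + 3) / (2 * n + 2) ^ 2 : ℝ) ≤ 1 := by
      rw [div_le_one (by positivity)]; nlinarith
    exact mul_le_one₀ ih (by positivity) h1

lemma acb_tendsto : Filter.Tendsto acb Filter.atTop (nhds 0) := by
  have h2 : Filter.Tendsto (fun n => acb n ^ 2) Filter.atTop (nhds 0) := by
    refine squeeze_zero (fun n => by positivity) (fun n => ?_)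
      (tendsto_one_div_add_atTop_nhds_zero_nat (𝕜 := ℝ))
    rw [le_div_iff₀ (by positivity)]
    have := acb_sq n
    nlinarith [mul_nonneg (sq_nonneg (acb n)) (Nat.cast_nonneg (α := ℝ) n)]
  have h3 := h2.sqrt
  simp only [Real.sqrt_zero] at h3
  refine h3.congr (fun n => Real.sqrt_sq (acb_pos n).le)

noncomputable def hcb (n : ℕ) (x : ℝ) : ℝ :=
  1 - cos x * ∑ k ∈ Finset.range (n + 1), acb k * sin x ^ (2 * k)

noncomputable def gcb (n : ℕ) (x : ℝ) : ℝ :=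
  x - ∑ k ∈ Finset.range (n + 1), acb k * sin x ^ (2 * k + 1) / (2 * k + 1)

lemma hcb_deriv (n : ℕ) (x : ℝ) :
    HasDerivAt (hcb n) ((2 * n + 1) * acb n * sin x ^ (2 * n + 1)) x := by
  induction n with
  | zero =>
    have : hcb 0 = fun x => 1 - cos x := by funext y; simp [hcb, acb_zero]
    rw [this]
    simpa [acb_zero] using (hasDerivAt_cos x).const_sub 1
  | succ n ih =>
    have : hcb (n + 1) = fun x => hcb n x - cos x * (acb (n + 1) * sin x ^ (2 * n + 2)) := by
      funext y
      simp only [hcb]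
      rw [Finset.sum_range_succ _ (n + 1)]
      ring
    rw [this]
    have hd := ih.sub ((hasDerivAt_cos x).mul
      (((hasDerivAt_sin x).pow (2 * n + 2)).const_mul (acb (n + 1))))
    refine hd.congr_deriv ?_
    have e := acb_succ n
    have c : cos x ^ 2 = 1 - sin x ^ 2 := by rw [cos_sq']
    simp only [Nat.add_sub_cancel, show 2 * n + 2 - 1 = 2 * n + 1 by omega]
    push_cast
    simp only [Pi.pow_apply]
    linear_combination (-sin x ^ (2 * n + 1)) * e
      - acb (n + 1) * (2 * n + 2) * sin x ^ (2 * n + 1) * c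

lemma gcb_deriv (n : ℕ) (x : ℝ) : HasDerivAt (gcb n) (hcb n x) x := by
  have hs : HasDerivAt
      (fun x => ∑ k ∈ Finset.range (n + 1), acb k * sin x ^ (2 * k + 1) / (2 * k + 1))
      (∑ k ∈ Finset.range (n + 1), cos x * (acb k * sin x ^ (2 * k))) x := by
    refine HasDerivAt.fun_sum fun k _ => ?_
    refine ((((hasDerivAt_sin x).pow (2 * k + 1)).const_mul (acb k)).div_const
      (2 * k + 1)).congr_deriv ?_
    simp only [Nat.add_sub_cancel]
    push_cast
    field_simp
  refine ((hasDerivAt_id x).sub hs).congr_deriv ?_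
  rw [hcb, Finset.mul_sum]

lemma mono_cb {f f' : ℝ → ℝ} (hf : ∀ x, HasDerivAt f (f' x) x)
    (h : ∀ x, 0 ≤ x → x ≤ π / 2 → 0 ≤ f' x) (h0 : f 0 = 0) :
    ∀ x, 0 ≤ x → x ≤ π / 2 → 0 ≤ f x := by
  intro x hx hx'
  have hm : MonotoneOn f (Set.Icc 0 (π / 2)) := by
    refine monotoneOn_of_deriv_nonneg (convex_Icc _ _)
      (fun y _ => (hf y).continuousAt.continuousWithinAt)
      (fun y _ => (hf y).differentiableAt.differentiableWithinAt) (fun y hy => ?_)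
    rw [interior_Icc] at hy
    rw [(hf y).deriv]
    exact h y hy.1.le hy.2.le
  rw [← h0]
  exact hm ⟨le_rfl, by positivity⟩ ⟨hx, hx'⟩ hx

lemma hcb_zero (n : ℕ) : hcb n 0 = 0 := by
  simp [hcb, Finset.sum_range_succ', acb_zero]

lemma gcb_zero (n : ℕ) : gcb n 0 = 0 := by
  simp [gcb]

lemma sin_nn {x : ℝ} (h : 0 ≤ x) (h' : x ≤ π / 2) : 0 ≤ sin x :=
  sin_nonneg_of_nonneg_of_le_pi h (by linarith [pi_pos])

lemma gcb_nonneg (n : ℕ) : 0 ≤ gcb n (π / 2) := by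
  refine mono_cb (gcb_deriv n) (mono_cb (hcb_deriv n) (fun x h h' => ?_) (hcb_zero n))
    (gcb_zero n) _ (by positivity) le_rfl
  have := sin_nn h h'
  have := acb_pos n
  positivity

lemma gcb_le (n : ℕ) : gcb n (π / 2) ≤ π / 2 * acb (n + 1) := by
  have key := mono_cb
    (f := fun x => π / 2 * acb (n + 1) * sin x ^ (2 * n + 2)
      - (gcb n x + (π / 2 - x) * hcb n x))
    (f' := fun x => (2 * n + 1) * acb n * sin x ^ (2 * n + 1)
      * (π / 2 * cos x - (π / 2 - x))) ?_ ?_ ?_ (π / 2) (by positivity) le_rfl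
  · simp at key
    linarith
  · intro x
    refine ((((hasDerivAt_sin x).pow (2 * n + 2)).const_mul (π / 2 * acb (n + 1))).sub
      ((gcb_deriv n x).add (((hasDerivAt_id x).const_sub (π / 2)).mul
        (hcb_deriv n x)))).congr_deriv ?_
    have e := acb_succ n
    simp only [show 2 * n + 2 - 1 = 2 * n + 1 by omega, id]
    push_cast
    linear_combination (π / 2 * sin x ^ (2 * n + 1) * cos x) * e
  · intro x h h'
    have := sin_nn h h'
    have := acb_pos n
    have hc := one_sub_mul_le_cos h h'
    have : 0 ≤ π / 2 * cos x - (π / 2 - x) := by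
      have h2 := mul_le_mul_of_nonneg_left hc (show 0 ≤ π / 2 by positivity)
      have h3 : π / 2 * (1 - 2 / π * x) = π / 2 - x := by
        have := pi_ne_zero
        field_simp
      linarith
    positivity
  · simp [gcb_zero, hcb_zero]

lemma term_cb (k : ℕ) : ((2 * k).choose k : ℝ) / (2 * 4 ^ k * (k + 1) * (2 * k + 1))
    = acb k / (2 * k + 1) - (acb k - acb (k + 1)) := by
  have e : acb (k + 1) = (2 * k + 1) * acb k / (2 * k + 2) := by
    rw [← acb_succ]; field_simp
  rw [e, acb]
  field_simp
  ring

lemma partial_cb (n : ℕ) : ∑ k ∈ Finset.range (n + 1),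
    ((2 * k).choose k : ℝ) / (2 * 4 ^ k * (k + 1) * (2 * k + 1))
    = π / 2 - 1 - gcb n (π / 2) + acb (n + 1) := by
  simp only [term_cb]
  rw [Finset.sum_sub_distrib, Finset.sum_range_sub' acb, acb_zero]
  simp [gcb]
  ring

/-- The series ∑_{k≥0} C(2k, k) / (2 · 4ᵏ · (k+1) · (2k+1)) converges with sum π/2 − 1. -/
theorem central_binom_series_pi_div_two_sub_one :
    Summable (fun k : ℕ => ((2 * k).choose k : ℝ) / (2 * 4 ^ k * (k + 1) * (2 * k + 1))) ∧
    ∑' k : ℕ, ((2 * k).choose k : ℝ) / (2 * 4 ^ k * (k + 1) * (2 * k + 1)) = π / 2 - 1 := by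
  have ha : Filter.Tendsto (fun n => acb (n + 1)) Filter.atTop (nhds 0) :=
    (Filter.tendsto_add_atTop_iff_nat 1).2 acb_tendsto
  have hg : Filter.Tendsto (fun n => gcb n (π / 2)) Filter.atTop (nhds 0) :=
    squeeze_zero gcb_nonneg gcb_le (by simpa using ha.const_mul (π / 2))
  have hs : HasSum (fun k : ℕ => ((2 * k).choose k : ℝ) / (2 * 4 ^ k * (k + 1) * (2 * k + 1)))
      (π / 2 - 1) := by
    rw [hasSum_iff_tendsto_nat_of_nonneg (fun k => by positivity),
      ← Filter.tendsto_add_atTop_iff_nat 1]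
    simp only [partial_cb]
    simpa using (hg.const_sub (π / 2 - 1)).add ha
  exact ⟨hs.summable, hs.tsum_eq⟩
end

section
/- For every real x with |x| ≤ 1, arcsin(x) = ∑_{n≥0} C(2n, n) · x^{2n+1} / (4^n · (2n+1)), where the series converges (including at the endpoints x = ±1). -/
open Real

lemma aux_coeff (n : ℕ) :
    Ring.choose ((1 / 2 : ℝ) + n - 1) n = ((2 * n).choose n : ℝ) / 4 ^ n := by
  rw [← Ring.multichoose_eq]
  have h : ∀ m : ℕ, (ascPochhammer ℕ m).smeval (1 / 2 : ℝ)
      = (m.factorial : ℝ) * ((Nat.centralBinom m : ℝ) / 4 ^ m) := by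
    intro m
    rw [Polynomial.ascPochhammer_smeval_eq_eval]
    induction m with
    | zero => simp
    | succ k ih =>
      rw [ascPochhammer_succ_eval, ih]
      have h2 : ((k : ℝ) + 1) * (k + 1).centralBinom = 2 * (2 * k + 1) * k.centralBinom := by
        exact_mod_cast Nat.succ_mul_centralBinom_succ k
      rw [Nat.factorial_succ]
      push_cast
      rw [pow_succ]
      have : (4 : ℝ) ^ k ≠ 0 := by positivity
      field_simp
      linear_combination (-2 : ℝ) * h2
  have h1 := Ring.factorial_nsmul_multichoose_eq_ascPochhammer (1 / 2 : ℝ) n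
  rw [h n, nsmul_eq_mul] at h1
  have : (n.factorial : ℝ) ≠ 0 := by positivity
  exact mul_left_cancel₀ this h1

lemma aux_inv_sqrt (x : ℝ) (hx : |x| < 1) :
    HasSum (fun n : ℕ => ((2 * n).choose n : ℝ) / 4 ^ n * x ^ (2 * n)) (1 / √(1 - x ^ 2)) := by
  have hb : x ^ 2 ∈ Metric.eball (0 : ℝ) 1 := by
    rw [← ENNReal.ofReal_one, Metric.eball_ofReal]
    simpa using hx
  have h := (Real.one_div_one_sub_rpow_hasFPowerSeriesOnBall_zero (1 / 2)).hasSum hb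
  simp only [FormalMultilinearSeries.ofScalars_apply_eq, aux_coeff, smul_eq_mul, zero_add] at h
  rw [← Real.sqrt_eq_rpow] at h
  simpa only [pow_mul] using h

lemma aux_open (x : ℝ) (hx : |x| < 1) :
    HasSum (fun n : ℕ => ((2 * n).choose n : ℝ) * x ^ (2 * n + 1) / (4 ^ n * (2 * n + 1)))
      (arcsin x) := by
  obtain ⟨r, hr, hr1⟩ := exists_between hx
  have hr0 : 0 < r := (abs_nonneg x).trans_lt hr
  have hu := (aux_inv_sqrt r (by rwa [abs_of_pos hr0])).summable
  set g : ℕ → ℝ → ℝ :=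
    fun n y => ((2 * n).choose n : ℝ) * y ^ (2 * n + 1) / (4 ^ n * (2 * n + 1)) with hgdef
  have hg : ∀ n y, y ∈ Set.Ioo (-r) r →
      HasDerivAt (g n) (((2 * n).choose n : ℝ) / 4 ^ n * y ^ (2 * n)) y := by
    intro n y _
    have := ((hasDerivAt_pow (2 * n + 1) y).const_mul ((2 * n).choose n : ℝ)).div_const
      (4 ^ n * (2 * n + 1))
    have e : ((2 * n).choose n : ℝ) / 4 ^ n * y ^ (2 * n) = ((2 * n).choose n : ℝ) *
        (((2 * n + 1 : ℕ) : ℝ) * y ^ (2 * n + 1 - 1)) / (4 ^ n * (2 * n + 1)) := by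
      rw [Nat.add_sub_cancel]
      push_cast
      have : (2 * (n : ℝ) + 1) ≠ 0 := by positivity
      field_simp
    rw [e]
    exact this
  have hg' : ∀ n y, y ∈ Set.Ioo (-r) r →
      ‖((2 * n).choose n : ℝ) / 4 ^ n * y ^ (2 * n)‖ ≤ ((2 * n).choose n : ℝ) / 4 ^ n * r ^ (2 * n) := by
    intro n y hy
    rw [norm_mul, norm_pow, Real.norm_of_nonneg (by positivity)]
    gcongr
    exact (abs_lt.mpr hy).le
  have h0 : (0 : ℝ) ∈ Set.Ioo (-r) r := ⟨by linarith, hr0⟩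
  have hg0 : Summable fun n => g n 0 := by simp [hgdef]
  have hxm : x ∈ Set.Ioo (-r) r := abs_lt.mp hr
  have hs := summable_of_summable_hasDerivAt_of_isPreconnected hu isOpen_Ioo isPreconnected_Ioo
    hg hg' h0 hg0 hxm
  have hd : ∀ y ∈ Set.Ioo (-r) r,
      HasDerivAt (fun z => ∑' n, g n z) (1 / √(1 - y ^ 2)) y := by
    intro y hy
    have := hasDerivAt_tsum_of_isPreconnected hu isOpen_Ioo isPreconnected_Ioo
      hg hg' h0 hg0 hy
    rwa [(aux_inv_sqrt y ((abs_lt.mpr hy).trans hr1)).tsum_eq] at this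
  have hd2 : ∀ y ∈ Set.Ioo (-r) r, HasDerivAt arcsin (1 / √(1 - y ^ 2)) y := by
    intro y hy
    exact hasDerivAt_arcsin (by linarith [hy.1]) (by linarith [hy.2])
  have key : Set.EqOn (fun z => ∑' n, g n z) arcsin (Set.Ioo (-r) r) := by
    refine isOpen_Ioo.eqOn_of_deriv_eq isPreconnected_Ioo
      (fun y hy => (hd y hy).differentiableAt.differentiableWithinAt)
      (fun y hy => (hd2 y hy).differentiableAt.differentiableWithinAt)
      (fun y hy => by rw [(hd y hy).deriv, (hd2 y hy).deriv]) h0 ?_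
    simp [hgdef]
  have := hs.hasSum
  have e : (∑' n, g n x) = arcsin x := key hxm
  rwa [e] at this

lemma aux_summable_one : Summable
    (fun n : ℕ => ((2 * n).choose n : ℝ) / (4 ^ n * (2 * n + 1))) := by
  refine summable_of_sum_range_le (c := π / 2) (fun n => by positivity) fun N => ?_
  have hc : ContinuousOn (fun x : ℝ => ∑ n ∈ Finset.range N,
      ((2 * n).choose n : ℝ) * x ^ (2 * n + 1) / (4 ^ n * (2 * n + 1))) (closure (Set.Ioo 0 1)) := by
    fun_prop
  have := le_on_closure (s := Set.Ioo (0 : ℝ) 1) (g := fun _ => π / 2) (fun x hx => ?_) hc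
    continuousOn_const (x := 1) (by rw [closure_Ioo (by norm_num)]; simp)
  · simpa using this
  · have hx' : |x| < 1 := by rw [abs_of_pos hx.1]; exact hx.2
    have hx0 : 0 ≤ x := hx.1.le
    exact (sum_le_hasSum _ (fun n _ => by positivity) (aux_open x hx')).trans
      (arcsin_le_pi_div_two x)

/-- For every real x with |x| ≤ 1, the arcsine power series
∑_{n≥0} C(2n, n) · x^(2n+1) / (4ⁿ · (2n+1)) converges (including at x = ±1)
and its sum is arcsin x. -/
theorem arcsin_series (x : ℝ) (hx : |x| ≤ 1) :
    HasSum (fun n : ℕ => ((2 * n).choose n : ℝ) * x ^ (2 * n + 1) / (4 ^ n * (2 * n + 1)))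
      (arcsin x) := by
  have hb : ∀ (n : ℕ) (y : ℝ), y ∈ Set.Icc (-1 : ℝ) 1 →
      ‖((2 * n).choose n : ℝ) * y ^ (2 * n + 1) / (4 ^ n * (2 * n + 1))‖
        ≤ ((2 * n).choose n : ℝ) / (4 ^ n * (2 * n + 1)) := by
    intro n y hy
    have h4 : (0 : ℝ) ≤ 4 ^ n * (2 * n + 1) := by positivity
    rw [norm_div, norm_mul, norm_pow, Real.norm_of_nonneg h4, Real.norm_of_nonneg (by positivity)]
    gcongr
    exact mul_le_of_le_one_right (by positivity)
      (pow_le_one₀ (norm_nonneg _) (abs_le.mpr hy))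
  have hxm : x ∈ Set.Icc (-1 : ℝ) 1 := abs_le.mp hx
  have hs := Summable.of_norm_bounded aux_summable_one (fun n => hb n x hxm)
  have hc := continuousOn_tsum (fun n => by fun_prop) aux_summable_one hb
  have key := Set.EqOn.of_subset_closure (s := Set.Ioo (-1 : ℝ) 1)
    (fun y hy => (aux_open y (abs_lt.mpr hy)).tsum_eq) hc continuous_arcsin.continuousOn
    Set.Ioo_subset_Icc_self (by rw [closure_Ioo (by norm_num)])
  have := hs.hasSum
  have e := key hxm
  simp only at e
  rwa [e] at this
end

section
/- The expected proportion of heads at the stopping time satisfies the strict inequalities 3/4 < E[H_τ/τ] < 1; combined with E[H_τ/τ] = π/4, this yields a probabilistic proof that 3 < π < 4. -/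
open MeasureTheory ProbabilityTheory Real
open scoped Classical


lemma rw_pm {Ω : Type*} [MeasurableSpace Ω] (P : Measure Ω) [IsProbabilityMeasure P]
    (X : ℕ → Ω → ℤ) (hmeas : ∀ i, Measurable (X i))
    (hheads : ∀ i, P {ω | X i ω = 1} = 1/2)
    (htails : ∀ i, P {ω | X i ω = -1} = 1/2) :
    ∀ᵐ ω ∂P, ∀ i, X i ω = 1 ∨ X i ω = -1 := by
  rw [ae_all_iff]
  intro i
  have h1 : MeasurableSet {ω | X i ω = 1} := hmeas i (measurableSet_singleton 1)
  have h2 : MeasurableSet {ω | X i ω = -1} := hmeas i (measurableSet_singleton (-1))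
  have hd : Disjoint {ω | X i ω = 1} {ω | X i ω = -1} := by
    rw [Set.disjoint_left]
    intro ω (h : X i ω = 1) (h' : X i ω = -1)
    omega
  have hu : P ({ω | X i ω = 1} ∪ {ω | X i ω = -1}) = 1 := by
    rw [measure_union hd h2, hheads, htails]
    exact ENNReal.add_halves 1
  exact (prob_compl_eq_zero_iff (h1.union h2)).2 hu

lemma rw_integral {Ω : Type*} [MeasurableSpace Ω] (P : Measure Ω) [IsProbabilityMeasure P]
    (X : ℕ → Ω → ℤ) (hmeas : ∀ i, Measurable (X i))
    (hheads : ∀ i, P {ω | X i ω = 1} = 1/2)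
    (htails : ∀ i, P {ω | X i ω = -1} = 1/2) (i : ℕ) :
    ∫ ω, (X i ω : ℝ) ∂P = 0 := by
  have h1 : MeasurableSet {ω | X i ω = 1} := hmeas i (measurableSet_singleton 1)
  have h2 : MeasurableSet {ω | X i ω = -1} := hmeas i (measurableSet_singleton (-1))
  have h : (fun ω => (X i ω : ℝ)) =ᵐ[P] fun ω =>
      ({ω | X i ω = 1}.indicator (fun _ => (1:ℝ)) ω - {ω | X i ω = -1}.indicator (fun _ => (1:ℝ)) ω) := by
    filter_upwards [rw_pm P X hmeas hheads htails] with ω hω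
    rcases hω i with h | h <;> simp [Set.indicator, h]
  rw [integral_congr_ae h, integral_sub ((integrable_const _).indicator h1)
    ((integrable_const _).indicator h2), integral_indicator_const _ h1,
    integral_indicator_const _ h2]
  simp only [measureReal_def, hheads, htails, sub_self]

lemma rw_unbounded {Ω : Type*} [MeasurableSpace Ω] (P : Measure Ω) [IsProbabilityMeasure P]
    (X : ℕ → Ω → ℤ) (hmeas : ∀ i, Measurable (X i))
    (hindep : iIndepFun X P)
    (hheads : ∀ i, P {ω | X i ω = 1} = 1/2)
    (htails : ∀ i, P {ω | X i ω = -1} = 1/2) :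
    ∀ᵐ ω ∂P, ∃ n, 1 ≤ ∑ i ∈ Finset.range n, X i ω := by
  have hpm := rw_pm P X hmeas hheads htails
  set Y : ℕ → Ω → ℝ := fun i ω => (X i ω : ℝ) with hY
  have hYm : ∀ i, Measurable (Y i) := fun i => (measurable_of_countable (fun z : ℤ => (z:ℝ))).comp (hmeas i)
  have hYs : ∀ i, StronglyMeasurable (Y i) := fun i => (hYm i).stronglyMeasurable
  have hYi : iIndepFun Y P :=
    hindep.comp (fun _ z => (z:ℝ)) (fun _ => measurable_of_countable _)
  have hint : ∀ i, Integrable (Y i) P := by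
    intro i
    refine Integrable.of_bound (hYs i).aestronglyMeasurable 1 ?_
    filter_upwards [hpm] with ω hω
    rcases hω i with h | h <;> simp [hY, h]
  let F := Filtration.natural Y hYs
  let S : ℕ → Ω → ℝ := fun n => ∑ i ∈ Finset.range (n+1), Y i
  have hM : Martingale S F P := by
    refine martingale_of_condExp_sub_eq_zero_nat ?_ ?_ ?_
    · intro n
      refine Finset.stronglyMeasurable_sum _ ?_
      intro i hi
      exact (Filtration.stronglyAdapted_natural hYs i).mono
        (F.mono (Nat.lt_succ_iff.1 (Finset.mem_range.1 hi)))
    · intro n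
      exact integrable_finsetSum' _ (fun i _ => hint i)
    · intro n
      have e : S (n+1) - S n = Y (n+1) := by
        simp only [S]
        rw [Finset.sum_range_succ _ (n+1)]
        simp
      rw [e]
      refine (hYi.condExp_natural_ae_eq_of_lt hYs (Nat.lt_succ_self n)).trans ?_
      have := rw_integral P X hmeas hheads htails (n+1)
      refine Filter.Eventually.of_forall fun ω => ?_
      exact this
  have hb := hM.submartingale.bddAbove_iff_exists_tendsto (R := 1) (by
    filter_upwards [hpm] with ω hω
    intro i
    have e : S (i+1) ω - S i ω = Y (i+1) ω := by
      simp only [S]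
      rw [Finset.sum_range_succ _ (i+1)]
      simp
    rw [e]
    rcases hω (i+1) with h | h <;> simp [hY, h])
  filter_upwards [hb, hpm] with ω hω hp
  by_contra hcon
  push Not at hcon
  have hbd : BddAbove (Set.range fun n => S n ω) := by
    refine ⟨1, ?_⟩
    rintro _ ⟨n, rfl⟩
    have := hcon (n+1)
    have h2 : S n ω = ((∑ i ∈ Finset.range (n+1), X i ω : ℤ) : ℝ) := by
      simp [S, hY]
    show S n ω ≤ 1
    rw [h2]
    exact_mod_cast this.le
  obtain ⟨c, hc⟩ := hω.1 hbd
  have h1 := (hc.comp (Filter.tendsto_add_atTop_nat 1)).sub hc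
  rw [sub_self] at h1
  have h2 := h1.abs
  rw [abs_zero] at h2
  have h3 : (fun n => |((fun n => S n ω) ∘ fun a => a + 1) n - S n ω|) = fun _ => (1:ℝ) := by
    funext i
    have e : S (i+1) ω - S i ω = Y (i+1) ω := by
      simp only [S]
      rw [Finset.sum_range_succ _ (i+1)]
      simp
    simp only [Function.comp]
    rw [e]
    rcases hp (i+1) with h | h <;> simp [hY, h]
  rw [h3] at h2
  exact one_ne_zero (tendsto_nhds_unique tendsto_const_nhds h2)

lemma rw_hits (x : ℕ → ℤ) (hx : ∀ i, x i = 1 ∨ x i = -1)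
    (h : ∃ n, 1 ≤ ∑ i ∈ Finset.range n, x i) :
    ∃ n, 1 ≤ n ∧ ∑ i ∈ Finset.range n, x i = 1 := by
  have hs := Nat.find_spec h
  have hm := fun m => Nat.find_min (m := m) h
  generalize Nat.find h = N at hs hm
  cases N with
  | zero => simp at hs
  | succ n =>
    refine ⟨n+1, by omega, ?_⟩
    have := hm n (by omega)
    rw [Finset.sum_range_succ] at hs ⊢
    rcases hx n with h | h <;> omega

lemma rw_count (x : ℕ → ℤ) (hx : ∀ i, x i = 1 ∨ x i = -1) (n : ℕ) :
    ∑ i ∈ Finset.range n, x i =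
      2 * (((Finset.range n).filter (fun i => x i = 1)).card : ℤ) - n := by
  rw [Finset.card_filter]
  induction n with
  | zero => simp
  | succ n ih =>
    rw [Finset.sum_range_succ, Finset.sum_range_succ, ih]
    rcases hx n with h | h <;> simp [h] <;> ring

lemma rw_meas {Ω : Type*} [MeasurableSpace Ω]
    (X : ℕ → Ω → ℤ) (hmeas : ∀ i, Measurable (X i))
    (τ : Ω → ℕ) (hτ : ∀ ω, τ ω = sInf {n | 1 ≤ n ∧ (∑ i ∈ Finset.range n, X i ω) = 1}) :
    Measurable τ := by
  have hS : ∀ n, MeasurableSet {ω | ∑ i ∈ Finset.range n, X i ω = 1} := fun n =>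
    (Finset.measurable_sum _ (fun i _ => hmeas i)) (measurableSet_singleton (1:ℤ))
  have hpos : ∀ n, 1 ≤ n → MeasurableSet {ω | τ ω = n} := by
    intro n hn
    have : {ω | τ ω = n} = {ω | ∑ i ∈ Finset.range n, X i ω = 1} ∩
        ⋂ k ∈ Finset.Ico 1 n, {ω | ∑ i ∈ Finset.range k, X i ω = 1}ᶜ := by
      ext ω
      simp only [Set.mem_ofPred_eq, Set.mem_inter_iff, Set.mem_iInter, Set.mem_compl_iff,
        Finset.mem_Ico]
      constructor
      · intro h
        rw [hτ] at h
        have hne : {n | 1 ≤ n ∧ (∑ i ∈ Finset.range n, X i ω) = 1}.Nonempty := by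
          apply Nat.nonempty_of_pos_sInf
          omega
        have h1 := Nat.sInf_mem hne
        rw [h] at h1
        refine ⟨h1.2, fun k hk hk' => ?_⟩
        have := Nat.sInf_le (s := {n | 1 ≤ n ∧ (∑ i ∈ Finset.range n, X i ω) = 1}) ⟨hk.1, hk'⟩
        omega
      · rintro ⟨h1, h2⟩
        rw [hτ]
        have hmem : n ∈ {n | 1 ≤ n ∧ (∑ i ∈ Finset.range n, X i ω) = 1} := ⟨hn, h1⟩
        refine le_antisymm (Nat.sInf_le hmem) ?_
        have h3 := Nat.sInf_mem ⟨n, hmem⟩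
        by_contra hlt
        exact h2 _ ⟨h3.1, not_le.1 hlt⟩ h3.2
    rw [this]
    exact (hS n).inter (Finset.measurableSet_biInter _ fun k _ => (hS k).compl)
  refine measurable_to_countable' fun n => ?_
  rcases Nat.eq_zero_or_pos n with rfl | hn
  · have : τ ⁻¹' {0} = (⋃ n : ℕ, {ω | τ ω = n + 1})ᶜ := by
      ext ω
      simp only [Set.mem_preimage, Set.mem_singleton_iff, Set.mem_compl_iff, Set.mem_iUnion,
        Set.mem_ofPred_eq, not_exists]
      constructor
      · intro h n; omega
      · intro h
        by_contra h0
        exact h (τ ω - 1) (by omega)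
    rw [this]
    exact (MeasurableSet.iUnion fun n => hpos (n+1) (by omega)).compl
  · exact hpos n hn

lemma rw_pos {Ω : Type*} [MeasurableSpace Ω] (P : Measure Ω) (f : Ω → ℝ) (A : Set Ω)
    (hf : Integrable f P) (h0 : ∀ᵐ ω ∂P, 0 ≤ f ω) (hA : P A ≠ 0)
    (h1 : ∀ᵐ ω ∂P, ω ∈ A → 0 < f ω) : 0 < ∫ ω, f ω ∂P := by
  rw [integral_pos_iff_support_of_nonneg_ae h0 hf]
  refine lt_of_lt_of_le (pos_iff_ne_zero.2 hA) (measure_mono_ae ?_)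
  filter_upwards [h1] with ω hω hA
  exact (hω hA).ne'

/-- The expected proportion of heads at the stopping time satisfies
3/4 < E[H_τ/τ] < 1; combined with E[H_τ/τ] = π/4 this gives 3 < π < 4. -/
theorem expected_proportion_bounds
{Ω : Type*} [MeasurableSpace Ω] (P : Measure Ω) [IsProbabilityMeasure P]
    (X : ℕ → Ω → ℤ) (hmeas : ∀ i, Measurable (X i))
    (hindep : iIndepFun X P)
    (hheads : ∀ i, P {ω | X i ω = 1} = 1/2)
    (htails : ∀ i, P {ω | X i ω = -1} = 1/2)
    (τ : Ω → ℕ) (hτ : ∀ ω, τ ω = sInf {n | 1 ≤ n ∧ (∑ i ∈ Finset.range n, X i ω) = 1})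
(H : ℕ → Ω → ℕ)
    (hH : ∀ n ω, H n ω = ((Finset.range n).filter (fun i => X i ω = 1)).card) :
    3 / 4 < ∫ ω, ((H (τ ω) ω : ℝ) / (τ ω : ℝ)) ∂P ∧
    ∫ ω, ((H (τ ω) ω : ℝ) / (τ ω : ℝ)) ∂P < 1 ∧
    ((∫ ω, ((H (τ ω) ω : ℝ) / (τ ω : ℝ)) ∂P = π / 4) → 3 < π ∧ π < 4) := by
  have hpm := rw_pm P X hmeas hheads htails
  have hτm := rw_meas X hmeas τ hτ
  have key : ∀ᵐ ω ∂P, (H (τ ω) ω : ℝ) / (τ ω : ℝ) = 1/2 + 1/(2 * (τ ω : ℝ)) ∧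
      1 ≤ τ ω ∧ (X 0 ω = 1 → τ ω = 1) ∧ (X 0 ω = -1 → 2 ≤ τ ω) := by
    filter_upwards [hpm, rw_unbounded P X hmeas hindep hheads htails] with ω hp hu
    have hne := rw_hits (fun i => X i ω) hp hu
    have hmem := Nat.sInf_mem (s := {n | 1 ≤ n ∧ (∑ i ∈ Finset.range n, X i ω) = 1}) hne
    have hle := fun k hk => Nat.sInf_le (s := {n | 1 ≤ n ∧ (∑ i ∈ Finset.range n, X i ω) = 1}) (m := k) hk
    have e := hτ ω
    rw [← e] at hmem
    obtain ⟨h1, h2⟩ := hmem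
    have h3 := rw_count (fun i => X i ω) hp (τ ω)
    rw [h2, ← hH] at h3
    refine ⟨?_, h1, ?_, ?_⟩
    · have h4 : (1:ℝ) = 2 * (H (τ ω) ω : ℝ) - (τ ω : ℝ) := by exact_mod_cast h3
      have h5 : (τ ω : ℝ) ≠ 0 := by positivity
      field_simp
      linarith
    · intro hx
      have := hle 1 ⟨le_rfl, by simpa using hx⟩
      omega
    · intro hx
      by_contra hlt
      have : τ ω = 1 := by omega
      rw [this] at h2
      simp [hx] at h2
  have hA : MeasurableSet {ω | X 0 ω = 1} := hmeas 0 (measurableSet_singleton 1)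
  have hfe : (fun ω => (H (τ ω) ω : ℝ) / (τ ω : ℝ)) =ᵐ[P]
      fun ω => 1/2 + 1/(2 * (τ ω : ℝ)) := key.mono fun ω h => h.1
  rw [integral_congr_ae hfe]
  have hfm : Measurable (fun ω => 1/2 + 1/(2 * (τ ω : ℝ))) :=
    (measurable_of_countable (fun n : ℕ => 1/2 + 1/(2 * (n : ℝ)))).comp hτm
  have hbnd : ∀ ω, 1 ≤ τ ω → 1/2 + 1/(2 * (τ ω : ℝ)) ≤ 1 := by
    intro ω h
    have h' : (1:ℝ) ≤ τ ω := by exact_mod_cast h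
    have : 1/(2 * (τ ω : ℝ)) ≤ 1/2 := by
      apply one_div_le_one_div_of_le <;> linarith
    linarith
  have hfi : Integrable (fun ω => 1/2 + 1/(2 * (τ ω : ℝ))) P := by
    refine Integrable.of_bound hfm.aestronglyMeasurable 1 ?_
    filter_upwards [key] with ω h
    rw [Real.norm_of_nonneg (by positivity)]
    exact hbnd ω h.2.1
  have hB : P {ω | X 0 ω = -1} ≠ 0 := by rw [htails]; simp
  have hgi : Integrable (fun ω => 1/2 + {ω | X 0 ω = 1}.indicator (fun _ => (1/2:ℝ)) ω) P :=
    (integrable_const _).add ((integrable_const _).indicator hA)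
  have L := rw_pos P (fun ω => (1/2 + 1/(2 * (τ ω : ℝ))) -
      (1/2 + {ω | X 0 ω = 1}.indicator (fun _ => (1/2:ℝ)) ω)) {ω | X 0 ω = -1}
      (hfi.sub hgi) (by
        filter_upwards [key] with ω h
        by_cases hx : X 0 ω = 1
        · simp [Set.indicator, hx, h.2.2.1 hx]
        · simp [Set.indicator, hx]) hB (by
        filter_upwards [key] with ω h
        intro (hx : X 0 ω = -1)
        have h' : (0:ℝ) < τ ω := by exact_mod_cast h.2.1
        simp [Set.indicator, hx, h'])
  have U := rw_pos P (fun ω => 1 - (1/2 + 1/(2 * (τ ω : ℝ)))) {ω | X 0 ω = -1}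
      ((integrable_const _).sub hfi) (by
        filter_upwards [key] with ω h
        linarith [hbnd ω h.2.1]) hB (by
        filter_upwards [key] with ω h
        intro (hx : X 0 ω = -1)
        have h' : (2:ℝ) ≤ τ ω := by exact_mod_cast h.2.2.2 hx
        have : 1/(2 * (τ ω : ℝ)) ≤ 1/4 := by
          apply one_div_le_one_div_of_le <;> linarith
        linarith)
  have G : ∫ ω, (1/2 + {ω | X 0 ω = 1}.indicator (fun _ => (1/2:ℝ)) ω) ∂P = 3/4 := by
    rw [integral_add (integrable_const _) ((integrable_const _).indicator hA),
      integral_indicator_const _ hA, measureReal_def, hheads]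
    simp only [integral_const, probReal_univ, smul_eq_mul, one_mul]
    norm_num
  rw [integral_sub hfi hgi, G] at L
  rw [integral_sub (integrable_const _) hfi] at U
  simp only [integral_const, probReal_univ, smul_eq_mul, one_mul] at L U
  exact ⟨by linarith, by linarith, fun h => ⟨by linarith, by linarith⟩⟩
end
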